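/- Let L̂ : L_p(μ) → ℂ be a continuous m-homogeneous polynomial, m ≥ 2, on a complex L_p(μ) space, and let k ≤ m. Then sup_{‖x‖_p ≤ 1} ‖D̂^k L̂(x)‖ ≤ C_{k,m} ‖L̂‖, where C_{k,m} = k!·m^{m/p}/((m−k)^{(m−k)/p}·k^{k/p}) if 1 ≤ p ≤ m′, C_{k,m} = k!·m^{m/m′}/((m−k)^{(m−k)/m′}·k^{k/m′}) if m′ ≤ p ≤ m, and C_{k,m} = k!·m^{m/p′}/((m−k)^{(m−k)/p′}·k^{k/p′}) if m ≤ p ≤ ∞ (with m′ = m/(m−1), p′ = p/(p−1), and 0⁰ read as 1 when k = m). -/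

import Mathlib

open Metric MeasureTheory
open scoped ENNReal

/-- The conjugate exponent `p' = p/(p-1)` of an extended-real exponent `p`
(with `p' = 1` for `p = ∞`), as a real number. -/
noncomputable def conjExp (p : ℝ≥0∞) : ℝ :=
  if p = ∞ then 1 else p.toReal / (p.toReal - 1)

/-- The Markov constant `C_{k,m} = k! m^{m/r} / ((m-k)^{(m-k)/r} k^{k/r})` with
regime exponent `r` (real powers, so `0⁰ = 1` when `k = m`). -/
noncomputable def markovC (k m : ℕ) (r : ℝ) : ℝ :=
  (k.factorial : ℝ) * (m : ℝ) ^ ((m : ℝ) / r)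
    / (((m : ℝ) - (k : ℝ)) ^ (((m : ℝ) - (k : ℝ)) / r) * (k : ℝ) ^ ((k : ℝ) / r))

/-! By Cauchy's estimate on the lines `t ↦ F (x + t y)`, averaged over `t` and `-t`, the derivatives
of an `m`-homogeneous polynomial `F` are controlled by `‖x + y‖ ^ m + ‖x - y‖ ^ m`. The Markov
constant with regime exponent `r` thus follows from the Clarkson inequality
`‖x + y‖ ^ m + ‖x - y‖ ^ m ≤ 2 (‖x‖ ^ r + ‖y‖ ^ r) ^ (m / r)` after optimising the relative size of
`x` and `y`. In `L^p` it holds with `r` the smallest of `p`, `p'` and `m'`: Riesz–Thorin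
interpolation gives it for complex numbers, and the direct and reverse Minkowski inequalities carry
it over to functions. -/

section RieszThorin

/-- The number `x |x|^(w-1)`, which has the phase of `x` and modulus `|x|^(re w)` when `re w > 0`;
being entire in `w`, it is the building block of the analytic family `interpFamily`. -/
noncomputable def phasePow (x w : ℂ) : ℂ := x * (‖x‖ : ℂ) ^ (w - 1)

@[simp]
lemma phasePow_one (x : ℂ) : phasePow x 1 = x := by simp [phasePow]

lemma norm_phasePow (x : ℂ) {w : ℂ} (hw : 0 < w.re) : ‖phasePow x w‖ = ‖x‖ ^ w.re := by
  rcases eq_or_ne x 0 with rfl | hx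
  · simp [phasePow, Real.zero_rpow hw.ne']
  · have hx' : 0 < ‖x‖ := norm_pos_iff.2 hx
    rw [phasePow, norm_mul, Complex.norm_cpow_eq_rpow_re_of_pos hx', Complex.sub_re, Complex.one_re,
      ← Real.rpow_one_add' hx'.le (by linarith), add_sub_cancel]

lemma norm_phasePow_le (x : ℂ) {w : ℂ} {R : ℝ} (hw : 0 < w.re) (hR : w.re ≤ R) :
    ‖phasePow x w‖ ≤ max 1 ‖x‖ ^ R := by
  rw [norm_phasePow x hw]
  exact (Real.rpow_le_rpow (norm_nonneg x) (le_max_right 1 _) hw.le).trans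
    (Real.rpow_le_rpow_of_exponent_le (le_max_left 1 _) hR)

@[fun_prop]
lemma differentiable_phasePow (x : ℂ) : Differentiable ℂ (phasePow x) := by
  rcases eq_or_ne x 0 with rfl | hx
  · have : phasePow 0 = fun _ => 0 := by ext; simp [phasePow]
    exact this ▸ differentiable_const 0
  · exact fun w => ((differentiableAt_id.sub_const 1).const_cpow
      (Or.inl (by simpa using hx))).const_mul x

lemma interp_pos {u v t : ℝ} (hu : 0 < u) (hv : 0 < v) (ht : t ∈ Set.Icc 0 1) :
    0 < (1 - t) * u + t * v := by
  simpa using (convex_Ioi (0 : ℝ)) hu hv (sub_nonneg.2 ht.2) ht.1 (by ring)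

lemma rpow_rpow_mul_rpow_rpow {S a₀ a₁ θ : ℝ} (hS : 0 ≤ S) (ha₀ : 0 ≤ a₀) (ha₁ : 0 ≤ a₁)
    (hθ : θ ∈ Set.Icc 0 1) :
    (S ^ a₀) ^ (1 - θ) * (S ^ a₁) ^ θ = S ^ ((1 - θ) * a₀ + θ * a₁) := by
  have hθ' : 0 ≤ 1 - θ := sub_nonneg.2 hθ.2
  rw [← Real.rpow_mul hS, ← Real.rpow_mul hS, mul_comm a₀, mul_comm a₁,
    Real.rpow_add_of_nonneg hS (mul_nonneg hθ' ha₀) (mul_nonneg hθ.1 ha₁)]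

lemma mul_rpow_mul_mul_rpow {S T a₀ a₁ b₀ b₁ θ : ℝ} (hS : 0 ≤ S) (hT : 0 ≤ T) (ha₀ : 0 ≤ a₀)
    (ha₁ : 0 ≤ a₁) (hb₀ : 0 ≤ b₀) (hb₁ : 0 ≤ b₁) (hθ : θ ∈ Set.Icc 0 1) :
    (S ^ a₀ * T ^ b₀) ^ (1 - θ) * (S ^ a₁ * T ^ b₁) ^ θ =
      S ^ ((1 - θ) * a₀ + θ * a₁) * T ^ ((1 - θ) * b₀ + θ * b₁) := by
  rw [Real.mul_rpow (by positivity) (by positivity), Real.mul_rpow (by positivity) (by positivity),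
    mul_mul_mul_comm, rpow_rpow_mul_rpow_rpow hS ha₀ ha₁ hθ, rpow_rpow_mul_rpow_rpow hT hb₀ hb₁ hθ]

variable {ι κ : Type*}

/-- The analytic family `z ↦ x |x|^(((1 - z) a₀ + z a₁) / a - 1)` of vectors used in the proof of
the Riesz–Thorin theorem. It passes through `x` at `z = θ` when `a = (1 - θ) a₀ + θ a₁`, and sends
the `ℓ^(1/a)` norm to the `ℓ^(1/a₀)` and `ℓ^(1/a₁)` norms on the two boundary lines of the strip. -/
noncomputable def interpFamily (a₀ a₁ a : ℝ) (x : ι → ℂ) (z : ℂ) : ι → ℂ :=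
  fun i => phasePow (x i) (((1 - z) * a₀ + z * a₁) / a)

lemma interpFamily_ofReal {a₀ a₁ a θ : ℝ} (ha : 0 < a) (h : a = (1 - θ) * a₀ + θ * a₁)
    (x : ι → ℂ) : interpFamily a₀ a₁ a x θ = x := by
  have hw : ((1 - θ) * a₀ + θ * a₁ : ℂ) / a = 1 := by
    rw [div_eq_one_iff_eq (by exact_mod_cast ha.ne'), h]
    push_cast
    rfl
  ext i
  rw [interpFamily, hw, phasePow_one]

@[fun_prop]
lemma differentiable_interpFamily (a₀ a₁ a : ℝ) (x : ι → ℂ) :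
    Differentiable ℂ (interpFamily a₀ a₁ a x) := by
  unfold interpFamily
  fun_prop

lemma re_interp_div (a₀ a₁ a : ℝ) (z : ℂ) :
    (((1 - z) * a₀ + z * a₁) / a).re = ((1 - z.re) * a₀ + z.re * a₁) / a := by
  simp [Complex.div_ofReal_re]

lemma norm_interpFamily_le {a₀ a₁ a : ℝ} (ha₀ : 0 < a₀) (ha₁ : 0 < a₁) (ha : 0 < a) (x : ι → ℂ)
    {z : ℂ} (hz : z.re ∈ Set.Icc 0 1) (i : ι) :
    ‖interpFamily a₀ a₁ a x z i‖ ≤ max 1 ‖x i‖ ^ ((a₀ + a₁) / a) := by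
  apply norm_phasePow_le <;> rw [re_interp_div]
  · exact div_pos (interp_pos ha₀ ha₁ hz) ha
  · gcongr
    · nlinarith [hz.1]
    · nlinarith [hz.2]

variable [Fintype ι] [Fintype κ]

lemma sum_norm_interpFamily_rpow {a₀ a₁ a s : ℝ} (ha : 0 < a) (hs : 0 < s) (x : ι → ℂ) {z : ℂ}
    (hz : (1 - z.re) * a₀ + z.re * a₁ = s) :
    ∑ i, ‖interpFamily a₀ a₁ a x z i‖ ^ s⁻¹ = ∑ i, ‖x i‖ ^ a⁻¹ := by
  have hw := re_interp_div a₀ a₁ a z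
  rw [hz] at hw
  refine Finset.sum_congr rfl fun i _ => ?_
  rw [interpFamily, norm_phasePow _ (hw ▸ div_pos hs ha), hw, ← Real.rpow_mul (norm_nonneg _),
    div_mul_eq_mul_div, mul_inv_cancel₀ hs.ne', one_div]

open Matrix Complex.HadamardThreeLines

/-- **Riesz–Thorin interpolation** for a bilinear form on a finite index set, in terms of the
inverse exponents `a = 1/s` and `b = 1/t` of the `ℓ^s` and `ℓ^t` norms. -/
theorem norm_dotProduct_mulVec_le_interp (M : Matrix ι κ ℂ) {a₀ a₁ b₀ b₁ C₀ C₁ θ : ℝ}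
    (ha₀ : 0 < a₀) (ha₁ : 0 < a₁) (hb₀ : 0 < b₀) (hb₁ : 0 < b₁) (hC₀ : 0 ≤ C₀) (hC₁ : 0 ≤ C₁)
    (hθ : θ ∈ Set.Icc 0 1)
    (h₀ : ∀ x y, ‖x ⬝ᵥ M *ᵥ y‖ ≤ C₀ * ((∑ i, ‖x i‖ ^ a₀⁻¹) ^ a₀ * (∑ j, ‖y j‖ ^ b₀⁻¹) ^ b₀))
    (h₁ : ∀ x y, ‖x ⬝ᵥ M *ᵥ y‖ ≤ C₁ * ((∑ i, ‖x i‖ ^ a₁⁻¹) ^ a₁ * (∑ j, ‖y j‖ ^ b₁⁻¹) ^ b₁))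
    {a b : ℝ} (ha : a = (1 - θ) * a₀ + θ * a₁) (hb : b = (1 - θ) * b₀ + θ * b₁)
    (x : ι → ℂ) (y : κ → ℂ) :
    ‖x ⬝ᵥ M *ᵥ y‖ ≤
      C₀ ^ (1 - θ) * C₁ ^ θ * ((∑ i, ‖x i‖ ^ a⁻¹) ^ a * (∑ j, ‖y j‖ ^ b⁻¹) ^ b) := by
  have ha_pos : 0 < a := ha ▸ interp_pos ha₀ ha₁ hθ
  have hb_pos : 0 < b := hb ▸ interp_pos hb₀ hb₁ hθ
  let X := interpFamily a₀ a₁ a x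
  let Y := interpFamily b₀ b₁ b y
  let f (z : ℂ) : ℂ := X z ⬝ᵥ M *ᵥ Y z
  have hf_diff : Differentiable ℂ f := by
    simp only [f, X, Y, dotProduct, mulVec]
    fun_prop
  have hf_bdd : BddAbove ((norm ∘ f) '' verticalClosedStrip 0 1) := by
    refine ⟨C₀ * ((∑ i, (max 1 ‖x i‖ ^ ((a₀ + a₁) / a)) ^ a₀⁻¹) ^ a₀ *
      (∑ j, (max 1 ‖y j‖ ^ ((b₀ + b₁) / b)) ^ b₀⁻¹) ^ b₀), ?_⟩
    rintro _ ⟨z, hz, rfl⟩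
    refine (h₀ (X z) (Y z)).trans ?_
    gcongr
    exacts [norm_interpFamily_le ha₀ ha₁ ha_pos x hz _, norm_interpFamily_le hb₀ hb₁ hb_pos y hz _]
  set S := ∑ i, ‖x i‖ ^ a⁻¹
  set T := ∑ j, ‖y j‖ ^ b⁻¹
  have hS : 0 ≤ S := by positivity
  have hT : 0 ≤ T := by positivity
  have hf_zero (z : ℂ) (hz : z.re = 0) : ‖f z‖ ≤ C₀ * (S ^ a₀ * T ^ b₀) := by
    have := h₀ (X z) (Y z)
    rwa [sum_norm_interpFamily_rpow ha_pos ha₀ x (by simp [hz]),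
      sum_norm_interpFamily_rpow hb_pos hb₀ y (by simp [hz])] at this
  have hf_one (z : ℂ) (hz : z.re = 1) : ‖f z‖ ≤ C₁ * (S ^ a₁ * T ^ b₁) := by
    have := h₁ (X z) (Y z)
    rwa [sum_norm_interpFamily_rpow ha_pos ha₁ x (by simp [hz]),
      sum_norm_interpFamily_rpow hb_pos hb₁ y (by simp [hz])] at this
  calc ‖x ⬝ᵥ M *ᵥ y‖ = ‖f θ‖ := by
        simp only [f, X, Y, interpFamily_ofReal ha_pos ha, interpFamily_ofReal hb_pos hb]
    _ ≤ (C₀ * (S ^ a₀ * T ^ b₀)) ^ (1 - θ) * (C₁ * (S ^ a₁ * T ^ b₁)) ^ θ :=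
      norm_le_interp_of_mem_verticalClosedStrip₀₁' f (z := θ) hθ hf_diff.diffContOnCl hf_bdd
        hf_zero hf_one
    _ = C₀ ^ (1 - θ) * C₁ ^ θ * (S ^ a * T ^ b) := by
      rw [Real.mul_rpow hC₀ (by positivity), Real.mul_rpow hC₁ (by positivity), mul_mul_mul_comm,
        mul_rpow_mul_mul_rpow hS hT ha₀.le ha₁.le hb₀.le hb₁.le hθ, ha, hb]

end RieszThorin

section Clarkson

/-- **Clarkson's inequality** with exponents `r` and `q` in a normed group. For conjugate exponents
`r ≤ 2 ≤ q` it holds in Hilbert spaces and in `L^p` for `r ≤ p ≤ q`. The right-hand side is not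
normalised to conjugate exponents, so that `r` may be kept while `q` is lowered. -/
def ClarksonInequality (E : Type*) [SeminormedAddCommGroup E] (r q : ℝ) : Prop :=
  ∀ x y : E, ‖x + y‖ ^ q + ‖x - y‖ ^ q ≤ 2 * (‖x‖ ^ r + ‖y‖ ^ r) ^ (q / r)

lemma clarksonInequality_one (E : Type*) [SeminormedAddCommGroup E] {q : ℝ} (hq : 0 ≤ q) :
    ClarksonInequality E 1 q := by
  intro x y
  have h_add := Real.rpow_le_rpow (norm_nonneg _) (norm_add_le x y) hq
  have h_sub := Real.rpow_le_rpow (norm_nonneg _) (norm_sub_le x y) hq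
  simp only [Real.rpow_one, div_one]
  linarith

lemma ClarksonInequality.mono_exponent {E : Type*} [SeminormedAddCommGroup E] {r q s : ℝ}
    (h : ClarksonInequality E r q) (hs : 0 < s) (hsq : s ≤ q) : ClarksonInequality E r s := by
  intro x y
  have hq : 0 < q := hs.trans_le hsq
  have power_mean : (1 / 2 * ‖x + y‖ ^ s + 1 / 2 * ‖x - y‖ ^ s) ^ (q / s) ≤
      (‖x‖ ^ r + ‖y‖ ^ r) ^ (q / r) := by
    have := (convexOn_rpow ((one_le_div hs).2 hsq)).2 (x := ‖x + y‖ ^ s) (y := ‖x - y‖ ^ s)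
      (Set.mem_Ici.2 (by positivity)) (Set.mem_Ici.2 (by positivity))
      one_half_pos.le one_half_pos.le (add_halves 1)
    simp only [smul_eq_mul] at this
    rw [← Real.rpow_mul (norm_nonneg _), ← Real.rpow_mul (norm_nonneg _),
      mul_div_cancel₀ _ hs.ne'] at this
    linarith [h x y]
  have h_root := Real.rpow_le_rpow (by positivity) power_mean (by positivity : 0 ≤ s / q)
  rw [← Real.rpow_mul (by positivity), ← Real.rpow_mul (by positivity), div_mul_div_cancel₀ hs.ne',
    div_self hq.ne', Real.rpow_one, div_mul_div_cancel₀' hq.ne'] at h_root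
  linarith

lemma rpow_sum_norm_rpow_le_of_dotProduct {ι : Type*} [Fintype ι] {r q C : ℝ}
    (hrq : r.HolderConjugate q) (hC : 0 ≤ C) {v : ι → ℂ}
    (h : ∀ x : ι → ℂ, ‖x ⬝ᵥ v‖ ≤ C * (∑ i, ‖x i‖ ^ r) ^ (1 / r)) :
    (∑ i, ‖v i‖ ^ q) ^ (1 / q) ≤ C := by
  obtain ⟨g, hg, hgv⟩ :=
    (NNReal.isGreatest_Lp Finset.univ (fun i => ‖v i‖₊) hrq.symm).1
  choose c hc hcv using fun i => Complex.exists_norm_eq_mul_self (v i)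
  have hg' : ∑ i, (g i : ℝ) ^ r ≤ 1 := mod_cast hg
  have hgv' : ∑ i, ‖v i‖ * g i = (∑ i, ‖v i‖ ^ q) ^ (1 / q) := by
    simpa using congrArg NNReal.toReal hgv
  have hdot : (fun i => g i * c i) ⬝ᵥ v = ((∑ i, ‖v i‖ * g i : ℝ) : ℂ) := by
    push_cast
    refine Finset.sum_congr rfl fun i _ => ?_
    rw [hcv]
    ring
  calc (∑ i, ‖v i‖ ^ q) ^ (1 / q) = ‖(fun i => g i * c i) ⬝ᵥ v‖ := by
        rw [hdot, hgv', Complex.norm_of_nonneg (by positivity)]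
    _ ≤ C * (∑ i, ‖(g i * c i : ℂ)‖ ^ r) ^ (1 / r) := h _
    _ = C * (∑ i, (g i : ℝ) ^ r) ^ (1 / r) := by simp [hc]
    _ ≤ C := mul_le_of_le_one_right hC
      (Real.rpow_le_one (by positivity) hg' (by have := hrq.pos; positivity))

open Matrix

lemma norm_dotProduct_hadamard_le_l1 (x y : Fin 2 → ℂ) :
    ‖x ⬝ᵥ !![1, 1; 1, -1] *ᵥ y‖ ≤ (‖x 0‖ + ‖x 1‖) * (‖y 0‖ + ‖y 1‖) := by
  have h_add := norm_add_le (y 0) (y 1)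
  have h_sub := norm_sub_le (y 0) (y 1)
  calc ‖x ⬝ᵥ !![1, 1; 1, -1] *ᵥ y‖ = ‖x 0 * (y 0 + y 1) + x 1 * (y 0 - y 1)‖ := by
        simp [dotProduct, mulVec, sub_eq_add_neg]
    _ ≤ ‖x 0‖ * ‖y 0 + y 1‖ + ‖x 1‖ * ‖y 0 - y 1‖ := by
      simpa only [norm_mul] using norm_add_le (x 0 * (y 0 + y 1)) (x 1 * (y 0 - y 1))
    _ ≤ (‖x 0‖ + ‖x 1‖) * (‖y 0‖ + ‖y 1‖) := by
      rw [add_mul]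
      gcongr

lemma norm_dotProduct_hadamard_le_l2 (x y : Fin 2 → ℂ) :
    ‖x ⬝ᵥ !![1, 1; 1, -1] *ᵥ y‖ ≤
      √2 * (√(‖x 0‖ ^ 2 + ‖x 1‖ ^ 2) * √(‖y 0‖ ^ 2 + ‖y 1‖ ^ 2)) := by
  have parallelogram := parallelogram_law_with_norm ℂ (y 0) (y 1)
  calc ‖x ⬝ᵥ !![1, 1; 1, -1] *ᵥ y‖ = ‖x 0 * (y 0 + y 1) + x 1 * (y 0 - y 1)‖ := by
        simp [dotProduct, mulVec, sub_eq_add_neg]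
    _ ≤ ‖x 0‖ * ‖y 0 + y 1‖ + ‖x 1‖ * ‖y 0 - y 1‖ := by
      simpa only [norm_mul] using norm_add_le (x 0 * (y 0 + y 1)) (x 1 * (y 0 - y 1))
    _ ≤ √(‖x 0‖ ^ 2 + ‖x 1‖ ^ 2) * √(‖y 0 + y 1‖ ^ 2 + ‖y 0 - y 1‖ ^ 2) := by
      simpa using Real.sum_mul_le_sqrt_mul_sqrt Finset.univ ![‖x 0‖, ‖x 1‖]
        ![‖y 0 + y 1‖, ‖y 0 - y 1‖]
    _ = √2 * (√(‖x 0‖ ^ 2 + ‖x 1‖ ^ 2) * √(‖y 0‖ ^ 2 + ‖y 1‖ ^ 2)) := by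
      rw [mul_left_comm, ← Real.sqrt_mul zero_le_two]
      rw [parallelogram]

-- The Hadamard matrix has norm `1` from `ℓ^1` to `ℓ^∞` and norm `√2` on `ℓ^2`.
theorem clarksonInequality_complex {r q : ℝ} (hrq : r.HolderConjugate q) (hq : 2 ≤ q) :
    ClarksonInequality ℂ r q := by
  intro a b
  have hq_pos := hrq.symm.pos
  have hr : r⁻¹ = (1 - 2 / q) * 1 + 2 / q * 2⁻¹ := by
    rw [← hrq.symm.one_sub_inv]
    ring
  have hθ : 2 / q ∈ Set.Icc 0 1 := ⟨by positivity, (div_le_one hq_pos).2 hq⟩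
  have h_const : √2 ^ (2 / q) = 2 ^ (1 / q) := by
    rw [Real.sqrt_eq_rpow, ← Real.rpow_mul zero_le_two]
    congr 1
    ring
  have interp (x : Fin 2 → ℂ) := norm_dotProduct_mulVec_le_interp !![1, 1; 1, -1]
    one_pos (inv_pos.2 two_pos) one_pos (inv_pos.2 two_pos) zero_le_one (Real.sqrt_nonneg 2) hθ
    (fun x y => by simpa using norm_dotProduct_hadamard_le_l1 x y)
    (fun x y => by simpa [Real.sqrt_eq_rpow] using norm_dotProduct_hadamard_le_l2 x y)
    hr hr x ![a, b]
  have h_root : (‖a + b‖ ^ q + ‖a - b‖ ^ q) ^ (1 / q) ≤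
      2 ^ (1 / q) * (‖a‖ ^ r + ‖b‖ ^ r) ^ (1 / r) := by
    have := rpow_sum_norm_rpow_le_of_dotProduct hrq
      (C := 2 ^ (1 / q) * (‖a‖ ^ r + ‖b‖ ^ r) ^ (1 / r))
      (v := !![1, 1; 1, -1] *ᵥ ![a, b]) (by positivity) fun x => (interp x).trans_eq ?_
    · simpa [mulVec, dotProduct, sub_eq_add_neg] using this
    · simp only [h_const, inv_inv, Real.one_rpow, one_mul, one_div, Fin.sum_univ_two, cons_val_zero,
        cons_val_one]
      ring
  have h_pow := Real.rpow_le_rpow (by positivity) h_root hq_pos.le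
  rwa [Real.mul_rpow (by positivity) (by positivity), ← Real.rpow_mul (by positivity),
    ← Real.rpow_mul (by positivity), ← Real.rpow_mul (by positivity), one_div_mul_cancel hq_pos.ne',
    Real.rpow_one, Real.rpow_one, one_div_mul_eq_div] at h_pow

lemma convexOn_add_le_add_of_add_eq {s : Set ℝ} {f : ℝ → ℝ} (hf : ConvexOn ℝ s f) {u v U V : ℝ}
    (hU : U ∈ s) (hV : V ∈ s) (hu : u ≤ U) (hv : v ≤ U) (h : u + v = U + V) :
    f u + f v ≤ f U + f V := by
  obtain ⟨a, b, ha, hb, hab, rfl⟩ := Icc_subset_segment (𝕜 := ℝ) ⟨(by linarith : V ≤ u), hu⟩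
  have hv_eq : v = a • U + b • V := by
    simp only [smul_eq_mul] at h ⊢
    linear_combination h - (U + V) * hab
  have hu_le := hf.2 hV hU ha hb hab
  have hv_le := hf.2 hU hV ha hb hab
  rw [← hv_eq] at hv_le
  simp only [smul_eq_mul] at hu_le hv_le ⊢
  linear_combination hu_le + hv_le + (f U + f V) * hab

-- By the parallelogram law, `‖x ± y‖ ^ 2` have the same sum as `(‖x‖ ± ‖y‖) ^ 2` and lie between
-- them, so convexity of `t ↦ t ^ (q / 2)` reduces the inequality to the scalars `‖x‖` and `‖y‖`.
theorem clarksonInequality_of_innerProductSpace (𝕜 : Type*) {E : Type*} [RCLike 𝕜]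
    [NormedAddCommGroup E] [InnerProductSpace 𝕜 E] {r q : ℝ} (hrq : r.HolderConjugate q)
    (hq : 2 ≤ q) : ClarksonInequality E r q := by
  intro x y
  have h_complex := clarksonInequality_complex hrq hq (‖x‖ : ℂ) (‖y‖ : ℂ)
  simp only [← Complex.ofReal_add, ← Complex.ofReal_sub, Complex.norm_real, Real.norm_eq_abs,
    abs_norm] at h_complex
  have hpow (t : ℝ) : (t ^ 2) ^ (q / 2) = |t| ^ q := by
    rw [← sq_abs, ← Real.rpow_natCast_mul (abs_nonneg t), Nat.cast_two,
      mul_div_cancel₀ q two_ne_zero]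
  have h_add : ‖x + y‖ ^ 2 ≤ (‖x‖ + ‖y‖) ^ 2 := by
    gcongr
    exact norm_add_le x y
  have h_sub : ‖x - y‖ ^ 2 ≤ (‖x‖ + ‖y‖) ^ 2 := by
    gcongr
    exact norm_sub_le x y
  have h_sum : ‖x + y‖ ^ 2 + ‖x - y‖ ^ 2 = (‖x‖ + ‖y‖) ^ 2 + (‖x‖ - ‖y‖) ^ 2 := by
    linarith [parallelogram_law_with_norm 𝕜 x y]
  have h_convex := convexOn_add_le_add_of_add_eq (convexOn_rpow (by linarith : 1 ≤ q / 2))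
    (Set.mem_Ici.2 (sq_nonneg _)) (Set.mem_Ici.2 (sq_nonneg _)) h_add h_sub h_sum
  simp only [hpow, abs_norm] at h_convex
  exact h_convex.trans h_complex

end Clarkson

section LpTransfer

lemma ennreal_rpow_mul_rpow_add_le (a b c d : ℝ≥0∞) {t : ℝ} (ht : t ∈ Set.Ioo 0 1) :
    a ^ t * c ^ (1 - t) + b ^ t * d ^ (1 - t) ≤ (a + b) ^ t * (c + d) ^ (1 - t) := by
  have ht' : 0 < 1 - t := sub_pos.2 ht.2
  have hconj : t⁻¹.HolderConjugate (1 - t)⁻¹ := by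
    rw [Real.holderConjugate_iff]
    exact ⟨(one_lt_inv₀ ht.1).2 ht.2, by simp⟩
  have := ENNReal.inner_le_Lp_mul_Lq Finset.univ ![a ^ t, b ^ t] ![c ^ (1 - t), d ^ (1 - t)] hconj
  simpa [Fin.sum_univ_two, ← ENNReal.rpow_mul, ht.1.ne', ht'.ne'] using this

theorem eLpNorm'_add_eLpNorm'_le {α : Type*} [MeasurableSpace α] {μ : Measure α} {f g : α → ℝ≥0∞}
    (hf : AEMeasurable f μ) (hg : AEMeasurable g μ) {t : ℝ} (ht₀ : 0 < t) (ht₁ : t ≤ 1) :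
    eLpNorm' f t μ + eLpNorm' g t μ ≤ eLpNorm' (f + g) t μ := by
  rcases ht₁.eq_or_lt with rfl | ht₁
  · simp [eLpNorm'_eq_lintegral_enorm, lintegral_add_left' hf]
  set A := eLpNorm' f t μ
  set B := eLpNorm' g t μ
  set N := eLpNorm' (f + g) t μ
  have hAN : A ≤ N := eLpNorm'_mono_enorm_ae ht₀.le (by simp)
  have hBN : B ≤ N := eLpNorm'_mono_enorm_ae ht₀.le (by simp)
  rcases eq_or_ne (A + B) 0 with h_zero | h_zero
  · simp [h_zero]
  rcases eq_or_ne (A + B) ∞ with h_top | h_top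
  · have hN : N = ∞ := (ENNReal.add_eq_top.1 h_top).elim (fun h => top_unique (h ▸ hAN))
      fun h => top_unique (h ▸ hBN)
    exact hN ▸ le_top
  have h_split (C : ℝ≥0∞) : C ^ t * C ^ (1 - t) = C := by
    rw [← ENNReal.rpow_add_of_nonneg _ _ ht₀.le (sub_pos.2 ht₁).le, add_sub_cancel,
      ENNReal.rpow_one]
  have h_pow (h : α → ℝ≥0∞) : ∫⁻ a, h a ^ t ∂μ = eLpNorm' h t μ ^ t := by
    simpa using lintegral_rpow_enorm_eq_rpow_eLpNorm' (f := h) (μ := μ) ht₀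
  have h_le : (A + B) ^ t * (A + B) ^ (1 - t) ≤ N ^ t * (A + B) ^ (1 - t) := by
    calc (A + B) ^ t * (A + B) ^ (1 - t)
        = ∫⁻ a, (f a ^ t * A ^ (1 - t) + g a ^ t * B ^ (1 - t)) ∂μ := by
          rw [lintegral_add_left' ((hf.pow_const t).mul_const _),
            lintegral_mul_const'' _ (hf.pow_const t), lintegral_mul_const'' _ (hg.pow_const t),
            h_pow, h_pow, h_split, h_split, h_split]
      _ ≤ ∫⁻ a, (f + g) a ^ t * (A + B) ^ (1 - t) ∂μ :=
        lintegral_mono fun a => ennreal_rpow_mul_rpow_add_le _ _ _ _ ⟨ht₀, ht₁⟩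
      _ = N ^ t * (A + B) ^ (1 - t) := by
        rw [lintegral_mul_const'' _ ((hf.add hg).pow_const t), h_pow]
  have h_ne_zero : (A + B) ^ (1 - t) ≠ 0 := by simp [ENNReal.rpow_eq_zero_iff, h_zero, h_top]
  have h_ne_top : (A + B) ^ (1 - t) ≠ ∞ := by simp [ENNReal.rpow_eq_top_iff, h_zero, h_top]
  exact (ENNReal.rpow_le_rpow_iff ht₀).1 ((ENNReal.mul_le_mul_iff_left h_ne_zero h_ne_top).1 h_le)

lemma clarksonInequality_iff_enorm {E : Type*} [SeminormedAddCommGroup E] {r q : ℝ} (hr : 0 ≤ r)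
    (hq : 0 ≤ q) : ClarksonInequality E r q ↔
      ∀ x y : E, ‖x + y‖ₑ ^ q + ‖x - y‖ₑ ^ q ≤ 2 * (‖x‖ₑ ^ r + ‖y‖ₑ ^ r) ^ (q / r) := by
  have h_rpow (z : E) {s : ℝ} (hs : 0 ≤ s) : ‖z‖ₑ ^ s = ENNReal.ofReal (‖z‖ ^ s) := by
    rw [← ofReal_norm, ENNReal.ofReal_rpow_of_nonneg (norm_nonneg z) hs]
  refine forall₂_congr fun x y => ?_
  rw [h_rpow _ hq, h_rpow _ hq, h_rpow _ hr, h_rpow _ hr,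
    ← ENNReal.ofReal_add (by positivity) (by positivity),
    ← ENNReal.ofReal_add (by positivity) (by positivity),
    ENNReal.ofReal_rpow_of_nonneg (by positivity) (by positivity), ← ENNReal.ofReal_ofNat 2,
    ← ENNReal.ofReal_mul zero_le_two, ENNReal.ofReal_le_ofReal_iff (by positivity)]

theorem ClarksonInequality.lp {α E : Type*} [MeasurableSpace α] {μ : Measure α}
    [NormedAddCommGroup E] {p : ℝ≥0∞} [Fact (1 ≤ p)] (hp : p ≠ ∞) {r q : ℝ} (hr : 0 < r)
    (hrp : r ≤ p.toReal) (hpq : p.toReal ≤ q) (h : ClarksonInequality E r q) :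
    ClarksonInequality (Lp E p μ) r q := by
  have hP : 0 < p.toReal := hr.trans_le hrp
  have hq : 0 < q := hP.trans_le hpq
  have h_exp : p.toReal / q * (q / r) = p.toReal / r := div_mul_div_cancel₀ hq.ne'
  rw [clarksonInequality_iff_enorm hr.le hq.le]
  intro x y
  have h_enorm {s : ℝ} (hs : 0 < s) (z : Lp E p μ) :
      ‖z‖ₑ ^ s = eLpNorm' (‖z ·‖ₑ ^ s) (p.toReal / s) μ := by
    rw [eLpNorm'_enorm_rpow _ _ _ hs, div_mul_cancel₀ _ hs.ne', Lp.enorm_def,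
      eLpNorm_eq_eLpNorm' (zero_lt_one.trans_le Fact.out).ne' hp]
  have h_meas (s : ℝ) (z : Lp E p μ) : AEMeasurable (‖z ·‖ₑ ^ s) μ :=
    (Lp.aestronglyMeasurable z).enorm.pow_const s
  calc ‖x + y‖ₑ ^ q + ‖x - y‖ₑ ^ q
      = eLpNorm' (‖(x + y) ·‖ₑ ^ q) (p.toReal / q) μ +
          eLpNorm' (‖(x - y) ·‖ₑ ^ q) (p.toReal / q) μ := by rw [h_enorm hq, h_enorm hq]
    _ ≤ eLpNorm' (fun a => ‖(x + y) a‖ₑ ^ q + ‖(x - y) a‖ₑ ^ q) (p.toReal / q) μ :=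
      eLpNorm'_add_eLpNorm'_le (h_meas q _) (h_meas q _) (by positivity) ((div_le_one hq).2 hpq)
    _ ≤ 2 * eLpNorm' (fun a => (‖x a‖ₑ ^ r + ‖y a‖ₑ ^ r) ^ (q / r)) (p.toReal / q) μ := by
      refine eLpNorm'_le_mul_eLpNorm'_of_ae_le_mul
        (((h_meas r x).add (h_meas r y)).pow_const _).aestronglyMeasurable ?_ (by positivity)
      filter_upwards [Lp.coeFn_add x y, Lp.coeFn_sub x y] with a h_add h_sub
      simpa only [enorm_eq_self, h_add, h_sub, Pi.add_apply, Pi.sub_apply] using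
        (clarksonInequality_iff_enorm hr.le hq.le).1 h (x a) (y a)
    _ = 2 * eLpNorm' ((‖x ·‖ₑ ^ r) + (‖y ·‖ₑ ^ r)) (p.toReal / r) μ ^ (q / r) := by
      have := eLpNorm'_enorm_rpow (μ := μ) (fun a => ‖x a‖ₑ ^ r + ‖y a‖ₑ ^ r) (p.toReal / q) (q / r)
        (by positivity)
      rw [h_exp] at this
      exact congrArg (2 * ·) this
    _ ≤ 2 * (eLpNorm' (‖x ·‖ₑ ^ r) (p.toReal / r) μ +
          eLpNorm' (‖y ·‖ₑ ^ r) (p.toReal / r) μ) ^ (q / r) := by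
      gcongr
      exact eLpNorm'_add_le (h_meas r x).aestronglyMeasurable (h_meas r y).aestronglyMeasurable
        ((one_le_div hr).2 hrp)
    _ = 2 * (‖x‖ₑ ^ r + ‖y‖ₑ ^ r) ^ (q / r) := by rw [h_enorm hr, h_enorm hr]

lemma conjExp_pos {p : ℝ≥0∞} (hp : 1 < p) : 0 < conjExp p := by
  by_cases hp_top : p = ∞
  · simp [conjExp, hp_top]
  · have hp_one : 1 < p.toReal := by
      simpa using (ENNReal.toReal_lt_toReal ENNReal.one_ne_top hp_top).2 hp
    rw [conjExp, if_neg hp_top]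
    exact div_pos (by linarith) (by linarith)

lemma holderConjugate_le_of_le {p p' q q' : ℝ} (hp : p.HolderConjugate p')
    (hq : q.HolderConjugate q') (hpq : p ≤ q) : q' ≤ p' := by
  rw [← inv_le_inv₀ hp.symm.pos hq.symm.pos, ← hp.one_sub_inv, ← hq.one_sub_inv]
  exact sub_le_sub_left (inv_anti₀ hp.pos hpq) 1

variable {α E : Type*} [MeasurableSpace α] (μ : Measure α) [NormedAddCommGroup E] {p : ℝ≥0∞}
  [Fact (1 ≤ p)] {s : ℝ}

lemma clarksonInequality_lp_of_holderConjugate (𝕜 : Type*) [RCLike 𝕜] [InnerProductSpace 𝕜 E]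
    (hp : p ≠ ∞) {r q : ℝ} (hrq : r.HolderConjugate q) (hrp : r ≤ p.toReal) (hpq : p.toReal ≤ q)
    (hs : 2 ≤ s) (hsq : s ≤ q) :
    ClarksonInequality (Lp E p μ) r s :=
  ((clarksonInequality_of_innerProductSpace 𝕜 hrq (hs.trans hsq)).lp hp hrq.pos hrp
    hpq).mono_exponent (two_pos.trans_le hs) hsq

lemma clarksonInequality_lp_of_le_conjExponent (𝕜 : Type*) [RCLike 𝕜] [InnerProductSpace 𝕜 E]
    (hs : 2 ≤ s) (hp : p ≤ ENNReal.ofReal s.conjExponent) :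
    ClarksonInequality (Lp E p μ) p.toReal s := by
  have hp_top : p ≠ ∞ := (hp.trans_lt ENNReal.ofReal_lt_top).ne
  have hss : s.HolderConjugate s.conjExponent := .conjExponent (by linarith)
  have hps : p.toReal ≤ s.conjExponent := ENNReal.toReal_le_of_le_ofReal hss.symm.nonneg hp
  have hp_one : 1 ≤ p.toReal := by simpa using ENNReal.toReal_mono hp_top (Fact.out : 1 ≤ p)
  rcases hp_one.eq_or_lt with hp_one | hp_one
  · rw [← hp_one]
    exact clarksonInequality_one _ (by linarith)
  · have hpq : p.toReal.HolderConjugate p.toReal.conjExponent := .conjExponent hp_one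
    have hsq : s ≤ p.toReal.conjExponent := holderConjugate_le_of_le hpq hss.symm hps
    have hs_two : s.conjExponent ≤ 2 := holderConjugate_le_of_le .two_two hss hs
    exact clarksonInequality_lp_of_holderConjugate μ 𝕜 hp_top hpq le_rfl (by linarith) hs hsq

lemma clarksonInequality_lp_conjExponent (𝕜 : Type*) [RCLike 𝕜] [InnerProductSpace 𝕜 E]
    (hs : 2 ≤ s) (hsp : ENNReal.ofReal s.conjExponent ≤ p) (hps : p ≤ ENNReal.ofReal s) :
    ClarksonInequality (Lp E p μ) s.conjExponent s := by
  have hp_top : p ≠ ∞ := (hps.trans_lt ENNReal.ofReal_lt_top).ne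
  exact clarksonInequality_lp_of_holderConjugate μ 𝕜 hp_top
    (Real.HolderConjugate.conjExponent (by linarith)).symm
    ((ENNReal.ofReal_le_iff_le_toReal hp_top).1 hsp)
    (ENNReal.toReal_le_of_le_ofReal (by linarith) hps) hs le_rfl

lemma clarksonInequality_lp_conjExp (𝕜 : Type*) [RCLike 𝕜] [InnerProductSpace 𝕜 E]
    (hs : 2 ≤ s) (hp : ENNReal.ofReal s ≤ p) :
    ClarksonInequality (Lp E p μ) (conjExp p) s := by
  by_cases hp_top : p = ∞
  · rw [conjExp, if_pos hp_top]
    exact clarksonInequality_one _ (by linarith)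
  · rw [conjExp, if_neg hp_top]
    have hsp : s ≤ p.toReal := (ENNReal.ofReal_le_iff_le_toReal hp_top).1 hp
    have hpq : p.toReal.HolderConjugate p.toReal.conjExponent := .conjExponent (by linarith)
    have hp_two : p.toReal.conjExponent ≤ 2 :=
      holderConjugate_le_of_le .two_two hpq (hs.trans hsp)
    exact clarksonInequality_lp_of_holderConjugate μ 𝕜 hp_top hpq.symm
      (hp_two.trans (hs.trans hsp)) le_rfl hs hsp

end LpTransfer

section CauchyEstimate

lemma iteratedDeriv_line_eq_iteratedFDeriv {𝕜 E G : Type*} [NontriviallyNormedField 𝕜]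
    [NormedAddCommGroup E] [NormedSpace 𝕜 E] [NormedAddCommGroup G] [NormedSpace 𝕜 G] {F : E → G}
    {k : ℕ} (hF : ContDiff 𝕜 k F) (x y : E) :
    iteratedDeriv k (fun t : 𝕜 => F (x + t • y)) 0 = iteratedFDeriv 𝕜 k F x fun _ => y := by
  have h_comp : (fun t : 𝕜 => F (x + t • y)) =
      (fun z => F (x + z)) ∘ ContinuousLinearMap.toSpanSingleton 𝕜 y := by
    ext t
    simp
  rw [iteratedDeriv_eq_iteratedFDeriv, h_comp,
    ContinuousLinearMap.iteratedFDeriv_comp_right _ (by fun_prop) _ le_rfl,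
    iteratedFDeriv_comp_add_left]
  simp

-- The function `t ↦ (g t + (-1) ^ k • g (-t)) / 2` has the same `k`-th derivative at `0` as `g`.
lemma norm_iteratedDeriv_zero_le_of_add_neg_le {G : Type*} [NormedAddCommGroup G] [NormedSpace ℂ G]
    [CompleteSpace G] {g : ℂ → G} (hg : Differentiable ℂ g) (k : ℕ) {B : ℝ}
    (hB : ∀ t : ℂ, ‖t‖ = 1 → ‖g t‖ + ‖g (-t)‖ ≤ 2 * B) :
    ‖iteratedDeriv k g 0‖ ≤ k.factorial * B := by
  set h : ℂ → G := fun t => (1 / 2 : ℂ) • (g t + (-1 : ℂ) ^ k • g (-t)) with h_def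
  have h_diff : Differentiable ℂ h := by fun_prop
  have h_deriv : iteratedDeriv k h 0 = iteratedDeriv k g 0 := by
    have hg_neg : Differentiable ℂ fun t => (-1 : ℂ) ^ k • g (-t) := by fun_prop
    have h_sign : (-1 : ℂ) ^ k * (-1) ^ k = 1 := by simp [← mul_pow]
    rw [h_def, iteratedDeriv_fun_const_smul_field,
      iteratedDeriv_fun_add hg.contDiff.contDiffAt hg_neg.contDiff.contDiffAt,
      iteratedDeriv_fun_const_smul_field, iteratedDeriv_comp_neg, smul_smul, h_sign, neg_zero,
      one_smul, ← two_smul ℂ, smul_smul]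
    norm_num
  have h_bound (t : ℂ) (ht : t ∈ sphere 0 1) : ‖h t‖ ≤ B := by
    have h_add := norm_add_le (g t) ((-1 : ℂ) ^ k • g (-t))
    have h_norm : ‖h t‖ = 1 / 2 * ‖g t + (-1 : ℂ) ^ k • g (-t)‖ := by
      rw [h_def, norm_smul]
      norm_num
    rw [norm_smul, norm_pow, norm_neg, norm_one, one_pow, one_mul] at h_add
    linarith [hB t (by simpa using ht)]
  simpa [h_deriv] using
    Complex.norm_iteratedDeriv_le_of_forall_mem_sphere_norm_le k one_pos h_diff.diffContOnCl h_bound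

variable {E G : Type*} [NormedAddCommGroup E] [NormedSpace ℂ E] [NormedAddCommGroup G]
  [NormedSpace ℂ G] {F : E → G}

theorem norm_iteratedFDeriv_apply_const_le_of_add_sub_le (hF : ContDiff ℂ ⊤ F) (k : ℕ) {x y : E}
    {B : ℝ} (hB : ∀ t : ℂ, ‖t‖ = 1 → ‖F (x + t • y)‖ + ‖F (x - t • y)‖ ≤ 2 * B) :
    ‖iteratedFDeriv ℂ k F x fun _ => y‖ ≤ k.factorial * B := by
  let ι : G →L[ℂ] UniformSpace.Completion G := UniformSpace.Completion.toComplL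
  have hF_compl : ContDiff ℂ ⊤ (ι ∘ F) := ι.contDiff.comp hF
  have h_line : Differentiable ℂ fun t : ℂ => (ι ∘ F) (x + t • y) :=
    (hF_compl.differentiable (by simp)).comp (by fun_prop)
  calc ‖iteratedFDeriv ℂ k F x fun _ => y‖ = ‖iteratedFDeriv ℂ k (ι ∘ F) x fun _ => y‖ := by
        rw [ι.iteratedFDeriv_comp_left hF.contDiffAt le_top]
        simp [ι]
    _ = ‖iteratedDeriv k (fun t : ℂ => (ι ∘ F) (x + t • y)) 0‖ := by
      rw [iteratedDeriv_line_eq_iteratedFDeriv (hF_compl.of_le le_top)]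
    _ ≤ k.factorial * B := norm_iteratedDeriv_zero_le_of_add_neg_le h_line k fun t ht => by
      simpa [ι, sub_eq_add_neg] using hB t ht

end CauchyEstimate

section Homogeneous

lemma iteratedFDeriv_smul_of_homogeneous {𝕜 E G : Type*} [NontriviallyNormedField 𝕜]
    [NormedAddCommGroup E] [NormedSpace 𝕜 E] [NormedAddCommGroup G] [NormedSpace 𝕜 G] {F : E → G}
    {k m : ℕ} (hF : ContDiff 𝕜 k F) (h_hom : ∀ (c : 𝕜) (u : E), F (c • u) = c ^ m • F u)
    (hk : k ≤ m) (c : 𝕜) (x : E) :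
    iteratedFDeriv 𝕜 k F (c • x) = c ^ (m - k) • iteratedFDeriv 𝕜 k F x := by
  have h_cont : Continuous fun c : 𝕜 => iteratedFDeriv 𝕜 k F (c • x) :=
    (hF.continuous_iteratedFDeriv le_rfl).comp (by fun_prop)
  refine congrFun (h_cont.ext_on (dense_compl_singleton 0)
    (g := fun c => c ^ (m - k) • iteratedFDeriv 𝕜 k F x) (by fun_prop) fun c hc => ?_) c
  refine smul_right_injective _ (pow_ne_zero k hc) ?_
  calc c ^ k • iteratedFDeriv 𝕜 k F (c • x) = iteratedFDeriv 𝕜 k (fun u => F (c • u)) x := by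
        rw [iteratedFDeriv_comp_const_smul c hF]
    _ = c ^ m • iteratedFDeriv 𝕜 k F x := by
      simp_rw [h_hom]
      exact iteratedFDeriv_const_smul_apply' hF.contDiffAt
    _ = c ^ k • c ^ (m - k) • iteratedFDeriv 𝕜 k F x := by
      rw [smul_smul, ← pow_add, Nat.add_sub_of_le hk]

lemma markovC_mul_rpow_mul_rpow {k m : ℕ} (hm : m ≠ 0) (hk : k ≤ m) (r : ℝ) :
    markovC k m r * ((((m - k : ℝ) / m) ^ r⁻¹) ^ (m - k) * ((k / m : ℝ) ^ r⁻¹) ^ k) =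
      k.factorial := by
  have hmk : (0 : ℝ) ≤ m - k := sub_nonneg.2 (Nat.cast_le.2 hk)
  have h_self_pos {t : ℝ} (ht : 0 ≤ t) : 0 < t ^ (t / r) := by
    rcases ht.eq_or_lt with rfl | ht
    · simp
    · positivity
  have h_exp : (m : ℝ) ^ ((m : ℝ) / r) = m ^ ((m - k : ℝ) / r) * (m : ℝ) ^ ((k : ℝ) / r) := by
    rw [← Real.rpow_add (by positivity)]
    ring_nf
  have h_pow {t : ℝ} (ht : 0 ≤ t) (n : ℕ) : (t ^ r⁻¹) ^ n = t ^ (n / r) := by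
    rw [← Real.rpow_mul_natCast ht, inv_mul_eq_div]
  rw [h_pow (by positivity), h_pow (by positivity), Nat.cast_sub hk,
    Real.div_rpow hmk (by positivity), Real.div_rpow (by positivity) (by positivity), markovC,
    h_exp]
  have := h_self_pos hmk
  have := h_self_pos k.cast_nonneg
  field_simp

variable {E G : Type*} [NormedAddCommGroup E] [NormedSpace ℂ E] [NormedAddCommGroup G]
  [NormedSpace ℂ G]

lemma ClarksonInequality.norm_iteratedFDeriv_apply_const_le_of_add_le_one {r : ℝ} {m : ℕ}
    (h : ClarksonInequality E r m) (hr : 0 < r) {F : E → G} (hF : ContDiff ℂ ⊤ F) {M : ℝ}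
    (hM : 0 ≤ M) (h_bound : ∀ u, ‖F u‖ ≤ M * ‖u‖ ^ m) (k : ℕ) {x y : E}
    (hxy : ‖x‖ ^ r + ‖y‖ ^ r ≤ 1) :
    ‖iteratedFDeriv ℂ k F x fun _ => y‖ ≤ k.factorial * M := by
  refine norm_iteratedFDeriv_apply_const_le_of_add_sub_le hF k fun t ht => ?_
  have h_clarkson : ‖x + t • y‖ ^ m + ‖x - t • y‖ ^ m ≤ 2 := by
    have := h x (t • y)
    simp only [Real.rpow_natCast, norm_smul, ht, one_mul] at this
    linarith [Real.rpow_le_one (by positivity) hxy (by positivity : 0 ≤ m / r)]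
  calc ‖F (x + t • y)‖ + ‖F (x - t • y)‖ ≤ M * ‖x + t • y‖ ^ m + M * ‖x - t • y‖ ^ m :=
        add_le_add (h_bound _) (h_bound _)
    _ = M * (‖x + t • y‖ ^ m + ‖x - t • y‖ ^ m) := (mul_add _ _ _).symm
    _ ≤ M * 2 := by gcongr
    _ = 2 * M := mul_comm _ _

-- Rescaling `x` and `y` by `σ` and `ρ` with `σ ^ r + ρ ^ r = 1` before the Cauchy estimate gains a
-- factor `σ ^ (m - k) * ρ ^ k`, which is largest for `σ ^ r = (m - k) / m` and `ρ ^ r = k / m`.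
theorem ClarksonInequality.norm_iteratedFDeriv_apply_const_le {r : ℝ} {m k : ℕ}
    (h : ClarksonInequality E r m) (hr : 0 < r) (hm : m ≠ 0) (hk : k ≤ m) {F : E → G}
    (hF : ContDiff ℂ ⊤ F) (h_hom : ∀ (c : ℂ) (u : E), F (c • u) = c ^ m • F u) {M : ℝ}
    (hM : 0 ≤ M) (h_bound : ∀ u, ‖F u‖ ≤ M * ‖u‖ ^ m) {x y : E} (hx : ‖x‖ ≤ 1) (hy : ‖y‖ ≤ 1) :
    ‖iteratedFDeriv ℂ k F x fun _ => y‖ ≤ markovC k m r * M := by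
  have hmk : (0 : ℝ) ≤ m - k := sub_nonneg.2 (Nat.cast_le.2 hk)
  set σ : ℝ := ((m - k : ℝ) / m) ^ r⁻¹
  set ρ : ℝ := (k / m : ℝ) ^ r⁻¹
  have hσ : 0 ≤ σ := by positivity
  have hρ : 0 ≤ ρ := by positivity
  have h_const : markovC k m r * (σ ^ (m - k) * ρ ^ k) = k.factorial :=
    markovC_mul_rpow_mul_rpow hm hk r
  have h_gain : 0 < σ ^ (m - k) * ρ ^ k :=
    (by positivity : 0 ≤ σ ^ (m - k) * ρ ^ k).lt_of_ne' fun h_zero =>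
      k.factorial_ne_zero (by simpa [h_zero, eq_comm] using h_const)
  have h_add : ‖(σ : ℂ) • x‖ ^ r + ‖(ρ : ℂ) • y‖ ^ r ≤ 1 := by
    have h_smul {s : ℝ} (hs : 0 ≤ s) {u : E} (hu : ‖u‖ ≤ 1) :
        ‖((s ^ r⁻¹ : ℝ) : ℂ) • u‖ ^ r ≤ s := by
      rw [norm_smul, Complex.norm_of_nonneg (by positivity),
        Real.mul_rpow (by positivity) (norm_nonneg u), Real.rpow_inv_rpow hs hr.ne']
      exact mul_le_of_le_one_right hs (Real.rpow_le_one (norm_nonneg u) hu hr.le)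
    calc ‖(σ : ℂ) • x‖ ^ r + ‖(ρ : ℂ) • y‖ ^ r ≤ (m - k) / m + k / m :=
          add_le_add (h_smul (by positivity) hx) (h_smul (by positivity) hy)
      _ = 1 := by field_simp; ring
  refine le_of_mul_le_mul_left ?_ h_gain
  calc σ ^ (m - k) * ρ ^ k * ‖iteratedFDeriv ℂ k F x fun _ => y‖
      = ‖iteratedFDeriv ℂ k F ((σ : ℂ) • x) fun _ => (ρ : ℂ) • y‖ := by
        rw [iteratedFDeriv_smul_of_homogeneous (hF.of_le le_top) h_hom hk,
          ContinuousMultilinearMap.map_smul_univ]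
        simp [norm_smul, abs_of_nonneg, hσ, hρ, mul_assoc, mul_left_comm]
    _ ≤ k.factorial * M :=
      h.norm_iteratedFDeriv_apply_const_le_of_add_le_one hr hF hM h_bound k h_add
    _ = σ ^ (m - k) * ρ ^ k * (markovC k m r * M) := by
      rw [← h_const]
      ring

end Homogeneous

section Diagonal

variable {𝕜 E G : Type*} [RCLike 𝕜] [NormedAddCommGroup E] [NormedSpace 𝕜 E]
  [NormedAddCommGroup G] [NormedSpace 𝕜 G] {m : ℕ}
  (L : ContinuousMultilinearMap 𝕜 (fun _ : Fin m => E) G)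

lemma diagonal_smul (c : 𝕜) (u : E) : (L fun _ => c • u) = c ^ m • L fun _ => u := by
  simpa using L.map_smul_univ (fun _ => c) fun _ => u

lemma bddAbove_norm_diagonal_closedBall :
    BddAbove ((fun u => ‖L fun _ => u‖) '' closedBall (0 : E) 1) := by
  refine ⟨‖L‖, Set.forall_mem_image.2 fun u hu => ?_⟩
  simpa using L.le_opNorm_mul_pow_of_le (m := fun _ => u)
    ((pi_norm_const_le u).trans (mem_closedBall_zero_iff.1 hu))

lemma norm_diagonal_le_sSup_mul_pow (u : E) :
    ‖L fun _ => u‖ ≤ sSup ((fun v => ‖L fun _ => v‖) '' closedBall (0 : E) 1) * ‖u‖ ^ m := by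
  set v : E := ((‖u‖⁻¹ : ℝ) : 𝕜) • u
  have hv : v ∈ closedBall 0 1 := by
    simpa [v, norm_smul] using inv_mul_le_one (a := ‖u‖)
  have huv : ((‖u‖ : ℝ) : 𝕜) • v = u := by
    rcases eq_or_ne u 0 with rfl | hu
    · simp
    · simp [v, smul_smul, hu]
  calc ‖L fun _ => u‖ = ‖L fun _ => v‖ * ‖u‖ ^ m := by
        rw [← huv, diagonal_smul, norm_smul]
        simp [huv, mul_comm]
    _ ≤ sSup ((fun v => ‖L fun _ => v‖) '' closedBall (0 : E) 1) * ‖u‖ ^ m := by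
      gcongr
      exact le_csSup (bddAbove_norm_diagonal_closedBall L) ⟨v, hv, rfl⟩

end Diagonal

theorem ClarksonInequality.sSup_norm_iteratedFDeriv_diagonal_le {E G : Type*}
    [NormedAddCommGroup E] [NormedSpace ℂ E] [NormedAddCommGroup G] [NormedSpace ℂ G] {r : ℝ}
    {m k : ℕ} (h : ClarksonInequality E r m) (hr : 0 < r) (hm : m ≠ 0) (hk : k ≤ m)
    (L : ContinuousMultilinearMap ℂ (fun _ : Fin m => E) G) {x : E} (hx : ‖x‖ ≤ 1) :
    sSup ((fun y => ‖iteratedFDeriv ℂ k (fun u => L fun _ => u) x fun _ => y‖) ''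
        closedBall (0 : E) 1) ≤
      markovC k m r * sSup ((fun u => ‖L fun _ => u‖) '' closedBall (0 : E) 1) := by
  have h_smooth : ContDiff ℂ ⊤ fun u => L fun _ => u :=
    L.contDiff.comp (contDiff_pi.2 fun _ => contDiff_id)
  have h_nonneg : 0 ≤ sSup ((fun u => ‖L fun _ => u‖) '' closedBall (0 : E) 1) :=
    Real.sSup_nonneg (Set.forall_mem_image.2 fun u _ => norm_nonneg _)
  refine csSup_le ((nonempty_closedBall.2 zero_le_one).image _)
    (Set.forall_mem_image.2 fun y hy => ?_)
  exact h.norm_iteratedFDeriv_apply_const_le hr hm hk h_smooth (diagonal_smul L) h_nonneg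
    (norm_diagonal_le_sSup_mul_pow L) hx (mem_closedBall_zero_iff.1 hy)

theorem markov_homogeneous_Lp_complex_general
    {α E G : Type*} [MeasurableSpace α] (μ : Measure α) [NormedAddCommGroup E]
    [InnerProductSpace ℂ E] [NormedAddCommGroup G] [NormedSpace ℂ G]
    (m k : ℕ) (hm : 2 ≤ m) (hk : k ≤ m) (p : ℝ≥0∞) [Fact (1 ≤ p)]
    (L : ContinuousMultilinearMap ℂ (fun _ : Fin m => Lp E p μ) G) :
    (p ≤ ENNReal.ofReal ((m : ℝ) / ((m : ℝ) - 1)) →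
      ∀ x : Lp E p μ, ‖x‖ ≤ 1 →
        sSup ((fun y => ‖iteratedFDeriv ℂ k (fun u => L fun _ => u) x (fun _ => y)‖) ''
            closedBall (0 : Lp E p μ) 1)
          ≤ markovC k m p.toReal
              * sSup ((fun y => ‖L fun _ => y‖) '' closedBall (0 : Lp E p μ) 1)) ∧
    (ENNReal.ofReal ((m : ℝ) / ((m : ℝ) - 1)) ≤ p → p ≤ (m : ℝ≥0∞) →
      ∀ x : Lp E p μ, ‖x‖ ≤ 1 →
        sSup ((fun y => ‖iteratedFDeriv ℂ k (fun u => L fun _ => u) x (fun _ => y)‖) ''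
            closedBall (0 : Lp E p μ) 1)
          ≤ markovC k m ((m : ℝ) / ((m : ℝ) - 1))
              * sSup ((fun y => ‖L fun _ => y‖) '' closedBall (0 : Lp E p μ) 1)) ∧
    ((m : ℝ≥0∞) ≤ p →
      ∀ x : Lp E p μ, ‖x‖ ≤ 1 →
        sSup ((fun y => ‖iteratedFDeriv ℂ k (fun u => L fun _ => u) x (fun _ => y)‖) ''
            closedBall (0 : Lp E p μ) 1)
          ≤ markovC k m (conjExp p)
              * sSup ((fun y => ‖L fun _ => y‖) '' closedBall (0 : Lp E p μ) 1)) := by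
  have hm_two : (2 : ℝ) ≤ m := mod_cast hm
  have hm_ne : m ≠ 0 := by lia
  have hp : 1 ≤ p := Fact.out
  rw [← ENNReal.ofReal_natCast m]
  refine ⟨fun hpm x hx => ?_, fun hpm hmp x hx => ?_, fun hmp x hx => ?_⟩
  · have hr : 0 < p.toReal := ENNReal.toReal_pos (zero_lt_one.trans_le hp).ne'
      (hpm.trans_lt ENNReal.ofReal_lt_top).ne
    exact (clarksonInequality_lp_of_le_conjExponent μ ℂ hm_two hpm)
      |>.sSup_norm_iteratedFDeriv_diagonal_le hr hm_ne hk L hx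
  · have hr : 0 < (m : ℝ).conjExponent := div_pos (by linarith) (by linarith)
    exact (clarksonInequality_lp_conjExponent μ ℂ hm_two hpm hmp)
      |>.sSup_norm_iteratedFDeriv_diagonal_le hr hm_ne hk L hx
  · have hr : 0 < conjExp p :=
      conjExp_pos ((ENNReal.one_lt_ofReal.2 (by linarith)).trans_le hmp)
    exact (clarksonInequality_lp_conjExp μ ℂ hm_two hmp)
      |>.sSup_norm_iteratedFDeriv_diagonal_le hr hm_ne hk L hx

/-- Markov-type inequality for an `m`-homogeneous polynomial on a complex `L_p(μ)` space:
`sup_{‖x‖_p ≤ 1} ‖D̂^k L̂(x)‖ ≤ C_{k,m} ‖L̂‖`, where the constant `C_{k,m}` uses the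
regime exponent `p` for `1 ≤ p ≤ m'`, `m' = m/(m-1)` for `m' ≤ p ≤ m`, and
`p' = p/(p-1)` for `m ≤ p ≤ ∞`. -/
theorem markov_homogeneous_Lp_complex
    {α : Type*} [MeasurableSpace α] (μ : Measure α)
    (m k : ℕ) (hm : 2 ≤ m) (hk : k ≤ m) (p : ℝ≥0∞) [Fact (1 ≤ p)]
    (F : Lp ℂ p μ → ℂ)
    (hF : ∃ L : ContinuousMultilinearMap ℂ (fun _ : Fin m => Lp ℂ p μ) ℂ,
      (∀ (σ : Equiv.Perm (Fin m)) (v : Fin m → Lp ℂ p μ), L (v ∘ σ) = L v) ∧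
      ∀ u, F u = L (fun _ => u)) :
    (p ≤ ENNReal.ofReal ((m : ℝ) / ((m : ℝ) - 1)) →
      ∀ x : Lp ℂ p μ, ‖x‖ ≤ 1 →
        sSup ((fun y => ‖iteratedFDeriv ℂ k F x (fun _ => y)‖) '' closedBall (0 : Lp ℂ p μ) 1)
          ≤ markovC k m p.toReal
              * sSup ((fun y => ‖F y‖) '' closedBall (0 : Lp ℂ p μ) 1)) ∧
    (ENNReal.ofReal ((m : ℝ) / ((m : ℝ) - 1)) ≤ p → p ≤ (m : ℝ≥0∞) →
      ∀ x : Lp ℂ p μ, ‖x‖ ≤ 1 →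
        sSup ((fun y => ‖iteratedFDeriv ℂ k F x (fun _ => y)‖) '' closedBall (0 : Lp ℂ p μ) 1)
          ≤ markovC k m ((m : ℝ) / ((m : ℝ) - 1))
              * sSup ((fun y => ‖F y‖) '' closedBall (0 : Lp ℂ p μ) 1)) ∧
    ((m : ℝ≥0∞) ≤ p →
      ∀ x : Lp ℂ p μ, ‖x‖ ≤ 1 →
        sSup ((fun y => ‖iteratedFDeriv ℂ k F x (fun _ => y)‖) '' closedBall (0 : Lp ℂ p μ) 1)
          ≤ markovC k m (conjExp p)
              * sSup ((fun y => ‖F y‖) '' closedBall (0 : Lp ℂ p μ) 1)) := by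
  obtain ⟨L, -, hL⟩ := hF
  obtain rfl := funext hL
  exact markov_homogeneous_Lp_complex_general μ m k hm hk p L
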